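/- Let G = F_p^n, H ≤ G a subgroup, and (G; A_0, A_1, A_2) a 3-coloring (partition of G into three parts) with |A_2| ≤ ε|G|, where 0 < δ < 1/4 and 0 < ε ≤ (δ/120)^{k+1}. If A_1|A_0 has VC-dimension at most k relative to H, then there exist m ≤ ⌈(120/δ)^k⌉ and h_1,…,h_m ∈ H such that for all h ∈ H there is i ∈ [m] with |(A_u − h) Δ (A_u − h_i)| ≤ δ|G| for both u = 0 and u = 1. -/

import Mathlib

/-!
For `h ∈ H` view the translates `A₀ - h` and `A₁ - h` as a partial set, which contains `A₁ - h`,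
avoids `A₀ - h` and is undefined on the few points of the third colour. Given slightly more
translates than the claim allows, pairwise far apart, the union `U` of their undefined points is
still small. Off `U` all of them are genuine sets, they still have small VC-dimension, and they are
still pairwise far apart, which contradicts Haussler's packing lemma. Hence a maximal far-apart
family of translates is small, and by maximality it is the required net.

Haussler's lemma comes from sampling. Among the traces of a family `𝒞` of VC-dimension `d` on a
random set of `s + 1` points, the one-inclusion graph, weighted by the number of sets above each
trace, has total edge weight at most `d * #𝒞`; so a random last point splits few sets off the
classes of the first `s` points. But as long as the sets of `𝒞` in one class are pairwise far apart,
a random point splits the class well. So there are almost as many classes as sets, while the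
Sauer-Shelah bound limits the number of classes.
-/

open Finset
open scoped symmDiff

section SetFamily

variable {α : Type*} [DecidableEq α] {𝒜 : Finset (Finset α)} {a : α} {B T : Finset α}

theorem card_mul_pow_le_of_vcDim_le (h𝒜 : 𝒜 ⊆ B.powerset) {d : ℕ} (hd : 𝒜.vcDim ≤ d) {t : ℝ}
    (ht₀ : 0 ≤ t) (ht₁ : t ≤ 1) : #𝒜 * t ^ d ≤ (1 + t) ^ #B := by
  have hsub : 𝒜.shatterer ⊆ B.powerset := fun S hS ↦ by
    obtain ⟨u, hu, hSu⟩ := (mem_shatterer.1 hS).exists_superset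
    exact mem_powerset.2 (hSu.trans (mem_powerset.1 (h𝒜 hu)))
  calc #𝒜 * t ^ d ≤ #𝒜.shatterer * t ^ d :=
        mul_le_mul_of_nonneg_right (mod_cast card_le_card_shatterer 𝒜) (by positivity)
    _ = ∑ _S ∈ 𝒜.shatterer, t ^ d := by rw [sum_const, nsmul_eq_mul]
    _ ≤ ∑ S ∈ 𝒜.shatterer, t ^ #S := sum_le_sum fun S hS ↦
        pow_le_pow_of_le_one ht₀ ht₁ ((mem_shatterer.1 hS).card_le_vcDim.trans hd)
    _ ≤ ∑ S ∈ B.powerset, t ^ #S := sum_le_sum_of_subset_of_nonneg hsub fun _ _ _ ↦ by positivity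
    _ = (1 + t) ^ #B := by simpa [add_comm] using sum_pow_mul_eq_add_pow t 1 B

theorem shatters_of_shatters_image_erase (h : (𝒜.image (·.erase a)).Shatters T) :
    𝒜.Shatters T := by
  have haT : a ∉ T := by
    obtain ⟨u, hu, hTu⟩ := h.exists_superset
    obtain ⟨S, -, rfl⟩ := mem_image.1 hu
    exact fun ha ↦ notMem_erase a S (hTu ha)
  intro t ht
  obtain ⟨u, hu, rfl⟩ := h ht
  obtain ⟨S, hS, rfl⟩ := mem_image.1 hu
  exact ⟨S, hS, by rw [inter_erase, erase_eq_of_notMem fun ha ↦ haT (mem_inter.1 ha).1]⟩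

theorem vcDim_memberSubfamily_union_nonMemberSubfamily_le :
    (𝒜.memberSubfamily a ∪ 𝒜.nonMemberSubfamily a).vcDim ≤ 𝒜.vcDim := by
  rw [memberSubfamily_union_nonMemberSubfamily]
  exact sup_mono fun T hT ↦
    mem_shatterer.2 (shatters_of_shatters_image_erase (mem_shatterer.1 hT))

theorem shatters_insert_of_shatters_memberSubfamily_inter
    (h : (𝒜.memberSubfamily a ∩ 𝒜.nonMemberSubfamily a).Shatters T) :
    a ∉ T ∧ 𝒜.Shatters (insert a T) := by
  simp only [Shatters, mem_inter, mem_memberSubfamily, mem_nonMemberSubfamily] at h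
  refine ⟨fun ha ↦ ?_, fun t ht ↦ ?_⟩
  · obtain ⟨u, hu, hTu⟩ := h subset_rfl
    exact hu.2.2 (inter_eq_left.1 hTu ha)
  · obtain ⟨u, ⟨⟨hmem, hau⟩, hnon, -⟩, hTu⟩ := h (t := t.erase a) (by grind)
    by_cases hat : a ∈ t
    · exact ⟨insert a u, hmem, by grind⟩
    · exact ⟨u, hnon, by grind⟩

theorem vcDim_memberSubfamily_inter_nonMemberSubfamily_lt
    (h : (𝒜.memberSubfamily a ∩ 𝒜.nonMemberSubfamily a).Nonempty) :
    (𝒜.memberSubfamily a ∩ 𝒜.nonMemberSubfamily a).vcDim < 𝒜.vcDim := by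
  obtain ⟨T, hT, hcard⟩ := exists_mem_eq_sup _ ⟨∅, mem_shatterer.2 (shatters_empty.2 h)⟩ card
  obtain ⟨haT, hins⟩ := shatters_insert_of_shatters_memberSubfamily_inter (mem_shatterer.1 hT)
  calc (𝒜.memberSubfamily a ∩ 𝒜.nonMemberSubfamily a).vcDim = #T := hcard
    _ < #(insert a T) := by rw [card_insert_of_notMem haT]; exact Nat.lt_succ_self _
    _ ≤ 𝒜.vcDim := hins.card_le_vcDim

end SetFamily

section OneInclusionGraph

variable {α : Type*} [DecidableEq α] {a : α} {V : Finset α} {w : Finset α → ℕ}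

/-- The subsets of `U` on which the weight `w` does not vanish. -/
def supportIn (w : Finset α → ℕ) (U : Finset α) : Finset (Finset α) := {S ∈ U.powerset | w S ≠ 0}

/-- The total weight of the edges in direction `a` of the cube of subsets of `U`, weighted by `w`:
an edge gets the smaller weight of its two endpoints `S` and `insert a S`. -/
def edgeWeight (w : Finset α → ℕ) (U : Finset α) (a : α) : ℕ :=
  ∑ S ∈ (U.erase a).powerset, min (w S) (w (insert a S))

theorem supportIn_max (ha : a ∉ V) :
    supportIn (fun S ↦ max (w S) (w (insert a S))) V =
      (supportIn w (insert a V)).memberSubfamily a ∪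
        (supportIn w (insert a V)).nonMemberSubfamily a := by
  ext S
  simp only [supportIn, mem_union, mem_memberSubfamily, mem_nonMemberSubfamily, mem_filter,
    mem_powerset]
  grind

theorem supportIn_min (ha : a ∉ V) :
    supportIn (fun S ↦ min (w S) (w (insert a S))) V =
      (supportIn w (insert a V)).memberSubfamily a ∩
        (supportIn w (insert a V)).nonMemberSubfamily a := by
  ext S
  simp only [supportIn, mem_inter, mem_memberSubfamily, mem_nonMemberSubfamily, mem_filter,
    mem_powerset]
  grind

theorem vcDim_supportIn_min_mul_sum_add_sum_le (ha : a ∉ V) :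
    (supportIn (fun S ↦ min (w S) (w (insert a S))) V).vcDim *
        ∑ S ∈ V.powerset, min (w S) (w (insert a S)) +
      ∑ S ∈ V.powerset, min (w S) (w (insert a S)) ≤
    (supportIn w (insert a V)).vcDim * ∑ S ∈ V.powerset, min (w S) (w (insert a S)) := by
  rcases (supportIn (fun S ↦ min (w S) (w (insert a S))) V).eq_empty_or_nonempty with h | h
  · have hzero : ∑ S ∈ V.powerset, min (w S) (w (insert a S)) = 0 :=
      sum_eq_zero fun S hS ↦ not_not.1 (filter_eq_empty_iff.1 h hS)
    simp only [hzero, mul_zero, add_zero, le_refl]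
  · rw [← Nat.succ_mul]
    rw [supportIn_min ha] at h ⊢
    exact Nat.mul_le_mul_right _ (vcDim_memberSubfamily_inter_nonMemberSubfamily_lt h)

theorem edgeWeight_insert_self (ha : a ∉ V) :
    edgeWeight w (insert a V) a = ∑ S ∈ V.powerset, min (w S) (w (insert a S)) := by
  rw [edgeWeight, erase_insert ha]

theorem edgeWeight_insert_le {b : α} (ha : a ∉ V) (hb : b ∈ V) :
    edgeWeight w (insert a V) b ≤ edgeWeight (fun S ↦ max (w S) (w (insert a S))) V b +
      edgeWeight (fun S ↦ min (w S) (w (insert a S))) V b := by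
  have hab : a ≠ b := fun h ↦ ha (h ▸ hb)
  have haVb : a ∉ V.erase b := fun h ↦ ha (mem_of_mem_erase h)
  rw [edgeWeight, erase_insert_of_ne hab, sum_powerset_insert haVb, edgeWeight, edgeWeight,
    ← sum_add_distrib, ← sum_add_distrib]
  refine sum_le_sum fun S _ ↦ ?_
  rw [insert_comm b a]
  omega

theorem sum_powerset_insert_eq_max_add_min (ha : a ∉ V) :
    ∑ S ∈ (insert a V).powerset, w S = ∑ S ∈ V.powerset, max (w S) (w (insert a S)) +
      ∑ S ∈ V.powerset, min (w S) (w (insert a S)) := by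
  rw [sum_powerset_insert ha, ← sum_add_distrib, ← sum_add_distrib]
  exact sum_congr rfl fun S _ ↦ (max_add_min _ _).symm

/- Splitting off a direction `a` replaces `w` by the maximum and the minimum of its restrictions to
the two halves of the cube. The edges in direction `a` weigh as much as the minimum, and this is
paid for by the smaller VC-dimension of the support of the minimum. -/
theorem sum_edgeWeight_le (w : Finset α → ℕ) (U : Finset α) :
    ∑ a ∈ U, edgeWeight w U a ≤ (supportIn w U).vcDim * ∑ S ∈ U.powerset, w S := by
  induction U using Finset.induction_on generalizing w with
  | empty => exact sum_empty.trans_le (Nat.zero_le _)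
  | insert a V ha ih =>
    set wmax := fun S ↦ max (w S) (w (insert a S))
    set wmin := fun S ↦ min (w S) (w (insert a S))
    have hmax : (supportIn wmax V).vcDim ≤ (supportIn w (insert a V)).vcDim := by
      rw [supportIn_max ha]
      exact vcDim_memberSubfamily_union_nonMemberSubfamily_le
    calc ∑ b ∈ insert a V, edgeWeight w (insert a V) b
        ≤ ∑ S ∈ V.powerset, wmin S + ∑ b ∈ V, (edgeWeight wmax V b + edgeWeight wmin V b) := by
          rw [sum_insert ha, edgeWeight_insert_self ha]
          gcongr with b hb
          exact edgeWeight_insert_le ha hb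
      _ ≤ ∑ S ∈ V.powerset, wmin S + ((supportIn wmax V).vcDim * ∑ S ∈ V.powerset, wmax S +
            (supportIn wmin V).vcDim * ∑ S ∈ V.powerset, wmin S) := by
          rw [sum_add_distrib]
          gcongr <;> exact ih _
      _ = (supportIn wmax V).vcDim * ∑ S ∈ V.powerset, wmax S +
            ((supportIn wmin V).vcDim * ∑ S ∈ V.powerset, wmin S +
              ∑ S ∈ V.powerset, wmin S) := by ring
      _ ≤ (supportIn w (insert a V)).vcDim * ∑ S ∈ V.powerset, wmax S +
            (supportIn w (insert a V)).vcDim * ∑ S ∈ V.powerset, wmin S := by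
          gcongr
          exact vcDim_supportIn_min_mul_sum_add_sum_le ha
      _ = (supportIn w (insert a V)).vcDim * ∑ S ∈ (insert a V).powerset, w S := by
          rw [sum_powerset_insert_eq_max_add_min ha, mul_add]

end OneInclusionGraph

theorem card_filter_not_mul_card_filter_le {β : Type*} (s : Finset β) (p : β → Prop)
    [DecidablePred p] : #{x ∈ s | ¬ p x} * #{x ∈ s | p x} ≤
      #s * min #{x ∈ s | ¬ p x} #{x ∈ s | p x} := by
  rw [← max_mul_min]
  exact Nat.mul_le_mul_right _ (max_le (card_filter_le _ _) (card_filter_le _ _))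

section Trace

variable {α : Type*} [DecidableEq α] {a : α} {B Y : Finset α} {𝒞 𝒮 : Finset (Finset α)} {r : ℝ}

/-- The number of sets of the family `𝒞` whose trace on `B` is `S`. -/
def traceWeight (𝒞 : Finset (Finset α)) (B S : Finset α) : ℕ := #{C ∈ 𝒞 | C ∩ B = S}

theorem sum_traceWeight (𝒞 : Finset (Finset α)) (B : Finset α) :
    ∑ S ∈ B.powerset, traceWeight 𝒞 B S = #𝒞 :=
  (card_eq_sum_card_fiberwise fun _ _ ↦ mem_coe.2 (mem_powerset.2 inter_subset_right)).symm

theorem supportIn_traceWeight (𝒞 : Finset (Finset α)) (B : Finset α) :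
    supportIn (traceWeight 𝒞 B) B = 𝒞.image (· ∩ B) := by
  ext S
  simp only [supportIn, traceWeight, mem_filter, mem_powerset, mem_image, card_ne_zero,
    Finset.Nonempty]
  grind

theorem image_inter_subset_powerset (𝒞 : Finset (Finset α)) (B : Finset α) :
    𝒞.image (· ∩ B) ⊆ B.powerset :=
  image_subset_iff.2 fun _ _ ↦ mem_powerset.2 inter_subset_right

theorem vcDim_image_inter_le (𝒞 : Finset (Finset α)) (B : Finset α) :
    (𝒞.image (· ∩ B)).vcDim ≤ 𝒞.vcDim := by
  refine sup_mono fun T hT ↦ ?_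
  simp only [mem_shatterer, Shatters, exists_mem_image] at hT ⊢
  have hTB : T ⊆ B := by
    obtain ⟨C, -, hC⟩ := hT subset_rfl
    exact (inter_eq_left.1 hC).trans inter_subset_right
  intro t ht
  obtain ⟨C, hC, rfl⟩ := hT ht
  exact ⟨C, hC, by grind⟩

theorem card_image_inter_le_pow {d : ℕ} (hd : 𝒞.vcDim ≤ d) {t : ℝ} (ht₀ : 0 < t)
    (ht₁ : t ≤ 1) (hB : #B * t ≤ d) : (#(𝒞.image (· ∩ B)) : ℝ) ≤ (Real.exp 1 / t) ^ d := by
  rw [div_pow, le_div_iff₀ (by positivity), ← Real.exp_nat_mul, mul_one]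
  calc (#(𝒞.image (· ∩ B)) : ℝ) * t ^ d ≤ (1 + t) ^ #B :=
        card_mul_pow_le_of_vcDim_le (image_inter_subset_powerset 𝒞 B)
          ((vcDim_image_inter_le 𝒞 B).trans hd) ht₀.le ht₁
    _ ≤ Real.exp t ^ #B := by
        gcongr
        linarith [Real.add_one_le_exp t]
    _ = Real.exp (#B * t) := (Real.exp_nat_mul t #B).symm
    _ ≤ Real.exp d := Real.exp_le_exp.2 hB

theorem sum_edgeWeight_traceWeight_le (𝒞 : Finset (Finset α)) (A : Finset α) :
    ∑ a ∈ A, edgeWeight (traceWeight 𝒞 A) A a ≤ 𝒞.vcDim * #𝒞 :=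
  calc ∑ a ∈ A, edgeWeight (traceWeight 𝒞 A) A a
      ≤ (supportIn (traceWeight 𝒞 A) A).vcDim * ∑ S ∈ A.powerset, traceWeight 𝒞 A S :=
        sum_edgeWeight_le _ _
    _ ≤ 𝒞.vcDim * #𝒞 := by
        rw [supportIn_traceWeight, sum_traceWeight]
        exact Nat.mul_le_mul_right _ (vcDim_image_inter_le 𝒞 A)

theorem edgeWeight_traceWeight_insert (ha : a ∉ B) :
    edgeWeight (traceWeight 𝒞 (insert a B)) (insert a B) a =
      ∑ S ∈ B.powerset, min #{C ∈ 𝒞 | C ∩ B = S ∧ a ∉ C} #{C ∈ 𝒞 | C ∩ B = S ∧ a ∈ C} := by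
  rw [edgeWeight_insert_self ha]
  refine sum_congr rfl fun S hS ↦ ?_
  have haS : a ∉ S := fun h ↦ ha (mem_powerset.1 hS h)
  have hnotMem : ∀ C, C ∩ insert a B = S ↔ C ∩ B = S ∧ a ∉ C := by grind
  have hmem : ∀ C, C ∩ insert a B = insert a S ↔ C ∩ B = S ∧ a ∈ C := fun C ↦ by
    refine ⟨fun h ↦ ?_, fun ⟨h, haC⟩ ↦ by rw [inter_insert_of_mem haC, h]⟩
    have haC : a ∈ C := (mem_inter.1 (h ▸ mem_insert_self a S)).1
    rw [inter_insert_of_mem haC] at h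
    exact ⟨by grind, haC⟩
  simp only [traceWeight, hnotMem, hmem]

theorem sum_sum_card_symmDiff (hY : ∀ C ∈ 𝒮, ∀ C' ∈ 𝒮, C ∆ C' ⊆ Y) :
    ∑ C ∈ 𝒮, ∑ C' ∈ 𝒮, #(C ∆ C') = 2 * ∑ a ∈ Y, #{C ∈ 𝒮 | a ∉ C} * #{C ∈ 𝒮 | a ∈ C} := by
  have hcard : ∀ C ∈ 𝒮, ∀ C' ∈ 𝒮, #(C ∆ C') = ∑ a ∈ Y,
      ((if a ∉ C then 1 else 0) * (if a ∈ C' then 1 else 0) +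
        (if a ∈ C then 1 else 0) * (if a ∉ C' then 1 else 0)) := by
    intro C hC C' hC'
    rw [← inter_eq_right.2 (hY C hC C' hC'), ← filter_mem_eq_inter, card_filter]
    refine sum_congr rfl fun a _ ↦ ?_
    by_cases a ∈ C <;> by_cases a ∈ C' <;> simp [mem_symmDiff, *]
  calc ∑ C ∈ 𝒮, ∑ C' ∈ 𝒮, #(C ∆ C')
      = ∑ a ∈ Y, ∑ C ∈ 𝒮, ∑ C' ∈ 𝒮, ((if a ∉ C then 1 else 0) * (if a ∈ C' then 1 else 0) +
          (if a ∈ C then 1 else 0) * (if a ∉ C' then 1 else 0)) := by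
        rw [sum_congr rfl fun C hC ↦ sum_congr rfl (hcard C hC),
          sum_congr rfl fun C _ ↦ sum_comm, sum_comm]
    _ = 2 * ∑ a ∈ Y, #{C ∈ 𝒮 | a ∉ C} * #{C ∈ 𝒮 | a ∈ C} := by
        rw [mul_sum]
        refine sum_congr rfl fun a _ ↦ ?_
        simp only [sum_add_distrib, ← sum_mul_sum, ← card_filter]
        ring

theorem card_sub_one_mul_le_sum_min (h𝒮 : 𝒮.Nonempty)
    (hY : ∀ C ∈ 𝒮, ∀ C' ∈ 𝒮, C ∆ C' ⊆ Y)
    (hsep : (𝒮 : Set (Finset α)).Pairwise fun C C' ↦ r ≤ #(C ∆ C')) :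
    ((#𝒮 : ℝ) - 1) * r ≤ 2 * (∑ a ∈ Y, min #{C ∈ 𝒮 | a ∉ C} #{C ∈ 𝒮 | a ∈ C} : ℕ) := by
  refine le_of_mul_le_mul_left ?_ (Nat.cast_pos.2 h𝒮.card_pos)
  calc (#𝒮 : ℝ) * ((#𝒮 - 1) * r) = ∑ C ∈ 𝒮, ∑ _C' ∈ 𝒮.erase C, r := by
        rw [← nsmul_eq_mul, ← sum_const]
        refine sum_congr rfl fun C hC ↦ ?_
        rw [sum_const, nsmul_eq_mul, cast_card_erase_of_mem hC]
    _ ≤ ∑ C ∈ 𝒮, ∑ C' ∈ 𝒮, (#(C ∆ C') : ℝ) := sum_le_sum fun C hC ↦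
        (sum_le_sum fun _ hC' ↦ hsep hC (mem_of_mem_erase hC') (ne_of_mem_erase hC').symm).trans
          (sum_le_sum_of_subset_of_nonneg (erase_subset _ _) fun _ _ _ ↦ Nat.cast_nonneg _)
    _ = 2 * ∑ a ∈ Y, ((#{C ∈ 𝒮 | a ∉ C} * #{C ∈ 𝒮 | a ∈ C} : ℕ) : ℝ) := by
        exact_mod_cast sum_sum_card_symmDiff hY
    _ ≤ 2 * ∑ a ∈ Y, ((#𝒮 * min #{C ∈ 𝒮 | a ∉ C} #{C ∈ 𝒮 | a ∈ C} : ℕ) : ℝ) := by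
        refine mul_le_mul_of_nonneg_left (sum_le_sum fun a _ ↦ ?_) two_pos.le
        exact_mod_cast card_filter_not_mul_card_filter_le 𝒮 (a ∈ ·)
    _ = #𝒮 * (2 * (∑ a ∈ Y, min #{C ∈ 𝒮 | a ∉ C} #{C ∈ 𝒮 | a ∈ C} : ℕ)) := by
        push_cast
        rw [← mul_sum]
        ring

end Trace

section Packing

theorem sum_powersetCard_succ_sum {α M : Type*} [Fintype α] [DecidableEq α] [AddCommMonoid M]
    (F : Finset α → α → M) (s : ℕ) :
    ∑ A ∈ powersetCard (s + 1) univ, ∑ a ∈ A, F A a =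
      ∑ B ∈ powersetCard s univ, ∑ a ∈ Bᶜ, F (insert a B) a := by
  rw [sum_sigma', sum_sigma']
  refine sum_nbij' (fun x ↦ ⟨x.1.erase x.2, x.2⟩) (fun x ↦ ⟨insert x.2 x.1, x.2⟩) ?_ ?_ ?_ ?_ ?_
    <;> simp only [mem_sigma, mem_powersetCard, subset_univ, true_and, mem_compl, Sigma.forall]
    <;> rintro A a ⟨hA, ha⟩
  · exact ⟨by rw [card_erase_of_mem ha, hA, Nat.add_sub_cancel], notMem_erase a A⟩
  · exact ⟨by rw [card_insert_of_notMem ha, hA], mem_insert_self a A⟩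
  · rw [insert_erase ha]
  · rw [erase_insert ha]
  · rw [insert_erase ha]

variable {α : Type*} [Fintype α] [DecidableEq α] {𝒞 : Finset (Finset α)} {r : ℝ}

theorem card_sub_card_image_inter_mul_le
    (hsep : (𝒞 : Set (Finset α)).Pairwise fun C C' ↦ r ≤ #(C ∆ C')) (B : Finset α) :
    ((#𝒞 : ℝ) - #(𝒞.image (· ∩ B))) * r ≤
      2 * (∑ a ∈ Bᶜ, edgeWeight (traceWeight 𝒞 (insert a B)) (insert a B) a : ℕ) := by
  let minority (S : Finset α) (a : α) : ℕ :=
    min #{C ∈ 𝒞 | C ∩ B = S ∧ a ∉ C} #{C ∈ 𝒞 | C ∩ B = S ∧ a ∈ C}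
  have hclass : ∀ S ∈ 𝒞.image (· ∩ B),
      ((#{C ∈ 𝒞 | C ∩ B = S} : ℝ) - 1) * r ≤ 2 * (∑ a ∈ Bᶜ, minority S a : ℕ) := by
    intro S hS
    obtain ⟨C₀, hC₀, hS⟩ := mem_image.1 hS
    simp only [minority, ← filter_filter]
    refine card_sub_one_mul_le_sum_min ⟨C₀, mem_filter.2 ⟨hC₀, hS⟩⟩ ?_
      (hsep.mono <| coe_subset.2 <| filter_subset _ _)
    intro C hC C' hC' a ha
    have htrace : a ∈ C ∩ B ↔ a ∈ C' ∩ B := by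
      rw [(mem_filter.1 hC).2, (mem_filter.1 hC').2]
    grind [mem_symmDiff, mem_compl]
  calc ((#𝒞 : ℝ) - #(𝒞.image (· ∩ B))) * r
      = ∑ S ∈ 𝒞.image (· ∩ B), ((#{C ∈ 𝒞 | C ∩ B = S} : ℝ) - 1) * r := by
        rw [← sum_mul, sum_sub_distrib, ← Nat.cast_sum, ← card_eq_sum_card_image, sum_const,
          nsmul_one]
    _ ≤ ∑ S ∈ 𝒞.image (· ∩ B), 2 * ((∑ a ∈ Bᶜ, minority S a : ℕ) : ℝ) := sum_le_sum hclass
    _ ≤ ∑ S ∈ B.powerset, 2 * ((∑ a ∈ Bᶜ, minority S a : ℕ) : ℝ) :=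
        sum_le_sum_of_subset_of_nonneg (image_inter_subset_powerset 𝒞 B)
          fun _ _ _ ↦ mul_nonneg zero_le_two (Nat.cast_nonneg _)
    _ = 2 * (∑ a ∈ Bᶜ, edgeWeight (traceWeight 𝒞 (insert a B)) (insert a B) a : ℕ) := by
        rw [← mul_sum, ← Nat.cast_sum, sum_comm]
        congr 2
        exact sum_congr rfl fun a ha ↦ (edgeWeight_traceWeight_insert (mem_compl.1 ha)).symm

theorem card_sub_mul_le_of_card_image_inter_le
    (hsep : (𝒞 : Set (Finset α)).Pairwise fun C C' ↦ r ≤ #(C ∆ C')) (hr : 0 ≤ r) {s : ℕ}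
    (hs : s ≤ Fintype.card α) {Φ : ℝ} (hΦ : ∀ B, #B = s → (#(𝒞.image (· ∩ B)) : ℝ) ≤ Φ) :
    (s + 1) * r * (#𝒞 - Φ) ≤ 2 * (Fintype.card α - s) * 𝒞.vcDim * #𝒞 := by
  set n := Fintype.card α
  have hchoose : (n.choose (s + 1) : ℝ) * (s + 1) = n.choose s * (n - s) := by
    rw [← Nat.cast_sub hs]
    exact_mod_cast Nat.choose_succ_right_eq n s
  have hsum : (n.choose s : ℝ) * ((#𝒞 - Φ) * r) ≤
      2 * (n.choose (s + 1) * (𝒞.vcDim * #𝒞)) :=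
    calc (n.choose s : ℝ) * ((#𝒞 - Φ) * r)
        = ∑ _B ∈ powersetCard s (univ : Finset α), (#𝒞 - Φ) * r := by
          rw [sum_const, card_powersetCard, card_univ, nsmul_eq_mul]
      _ ≤ ∑ B ∈ powersetCard s (univ : Finset α),
            2 * ((∑ a ∈ Bᶜ, edgeWeight (traceWeight 𝒞 (insert a B)) (insert a B) a : ℕ) : ℝ) :=
          sum_le_sum fun B hB ↦ (mul_le_mul_of_nonneg_right
            (sub_le_sub_left (hΦ B (mem_powersetCard_univ.1 hB)) _) hr).trans
            (card_sub_card_image_inter_mul_le hsep B)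
      _ = 2 * ∑ A ∈ powersetCard (s + 1) (univ : Finset α),
            ((∑ a ∈ A, edgeWeight (traceWeight 𝒞 A) A a : ℕ) : ℝ) := by
          rw [← mul_sum, ← Nat.cast_sum, ← Nat.cast_sum, sum_powersetCard_succ_sum]
      _ ≤ 2 * ∑ _A ∈ powersetCard (s + 1) (univ : Finset α), ((𝒞.vcDim * #𝒞 : ℕ) : ℝ) := by
          refine mul_le_mul_of_nonneg_left (sum_le_sum fun A _ ↦ ?_) two_pos.le
          exact_mod_cast sum_edgeWeight_traceWeight_le 𝒞 A
      _ = 2 * (n.choose (s + 1) * (𝒞.vcDim * #𝒞)) := by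
          rw [sum_const, card_powersetCard, card_univ, nsmul_eq_mul, Nat.cast_mul]
  refine le_of_mul_le_mul_left ?_ (Nat.cast_pos.2 (Nat.choose_pos hs) : (0 : ℝ) < n.choose s)
  linear_combination (s + 1 : ℝ) * hsum + 2 * 𝒞.vcDim * #𝒞 * hchoose

theorem card_le_two_mul_exp_pow_of_pairwise_le_card_symmDiff {d : ℕ} (hd : 𝒞.vcDim ≤ d) {δ : ℝ}
    (hδ₀ : 0 < δ) (hδ₁ : δ ≤ 1)
    (hsep : (𝒞 : Set (Finset α)).Pairwise fun C C' ↦ δ * Fintype.card α ≤ #(C ∆ C')) :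
    (#𝒞 : ℝ) ≤ 2 * (4 * Real.exp 1 / δ) ^ d := by
  set n := Fintype.card α
  set Φ : ℝ := (Real.exp 1 / (δ / 4)) ^ d with hΦ
  -- With `4 * d < (s + 1) * δ`, coinciding traces cost at most half of the sets of `𝒞`.
  set s := ⌊4 * d / δ⌋₊
  have htrace : ∀ B : Finset α, #B ≤ s → (#(𝒞.image (· ∩ B)) : ℝ) ≤ Φ := fun B hB ↦ by
    refine card_image_inter_le_pow hd (by positivity) (by linarith) ?_
    have hBs : (#B : ℝ) ≤ 4 * d / δ := (Nat.le_floor_iff (by positivity)).1 hB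
    rw [le_div_iff₀ hδ₀] at hBs
    linarith
  rw [show 4 * Real.exp 1 / δ = Real.exp 1 / (δ / 4) by field_simp, ← hΦ]
  have hΦ₀ : 0 ≤ Φ := by positivity
  rcases le_or_gt n s with hns | hsn
  · have hcard := htrace univ hns
    simp only [inter_univ, image_id'] at hcard
    linarith
  · have hstep := card_sub_mul_le_of_card_image_inter_le hsep (by positivity) hsn.le
      fun B hB ↦ htrace B hB.le
    have hn : (0 : ℝ) < n := by exact_mod_cast (Nat.zero_le s).trans_lt hsn
    have hs : 4 * d < (s + 1) * δ := (div_lt_iff₀ hδ₀).1 (Nat.lt_floor_add_one _)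
    have hdim : (𝒞.vcDim : ℝ) ≤ d := mod_cast hd
    have hbound : (s + 1) * δ * (#𝒞 - Φ) ≤ 2 * d * #𝒞 := by
      refine le_of_mul_le_mul_left (hstep.trans' (le_of_eq (by ring)) |>.trans ?_) hn
      calc 2 * ((n : ℝ) - s) * 𝒞.vcDim * #𝒞 ≤ 2 * n * d * #𝒞 := by
            gcongr
            exact sub_le_self _ (Nat.cast_nonneg s)
        _ = n * (2 * d * #𝒞) := by ring
    by_contra! hlt
    have hlarge : 4 * d * (#𝒞 - Φ) < (s + 1) * δ * (#𝒞 - Φ) :=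
      mul_lt_mul_of_pos_right hs (by linarith)
    have hhalf : 0 ≤ d * (#𝒞 - 2 * Φ) := mul_nonneg (Nat.cast_nonneg d) (sub_nonneg.2 hlt.le)
    linarith

/-- **Haussler's packing lemma** -/
theorem card_le_pow_of_pairwise_le_card_symmDiff {d : ℕ} (hd : 𝒞.vcDim ≤ d) {δ : ℝ}
    (hδ₀ : 0 < δ) (hδ₁ : δ ≤ 1)
    (hsep : (𝒞 : Set (Finset α)).Pairwise fun C C' ↦ δ * Fintype.card α ≤ #(C ∆ C')) :
    (#𝒞 : ℝ) ≤ (24 / δ) ^ d := by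
  rcases d.eq_zero_or_pos with rfl | hpos
  · have hsub : 𝒞 ⊆ (univ : Finset α).powerset := by rw [powerset_univ]; exact subset_univ 𝒞
    simpa using card_mul_pow_le_of_vcDim_le hsub hd le_rfl zero_le_one
  calc (#𝒞 : ℝ) ≤ 2 * (4 * Real.exp 1 / δ) ^ d :=
        card_le_two_mul_exp_pow_of_pairwise_le_card_symmDiff hd hδ₀ hδ₁ hsep
    _ ≤ 2 ^ d * (4 * Real.exp 1 / δ) ^ d := by
        gcongr
        exact le_self_pow₀ one_le_two hpos.ne'
    _ = (8 * Real.exp 1 / δ) ^ d := by rw [← mul_pow]; ring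
    _ ≤ (24 / δ) ^ d := by
        gcongr
        linarith [Real.exp_one_lt_d9]

end Packing

section Cover

variable {ι : Type*} {R : SetRel ι ι} {s : Set ι}

theorem exists_maximal_isSeparated (R : SetRel ι ι) (s : Set ι) :
    ∃ N, Maximal (fun N ↦ N ⊆ s ∧ R.IsSeparated N) N :=
  zorn_subset {N | N ⊆ s ∧ R.IsSeparated N} fun c hc hchain ↦
    ⟨⋃₀ c, ⟨Set.sUnion_subset fun _ hN ↦ (hc hN).1,
      (Set.pairwise_sUnion hchain.directedOn).2 fun _ hN ↦ (hc hN).2⟩,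
      fun _ ↦ Set.subset_sUnion_of_mem⟩

theorem exists_isCover_card_le [R.IsRefl] [R.IsSymm] {M : ℕ}
    (h : ∀ T : Finset ι, (T : Set ι) ⊆ s → R.IsSeparated (T : Set ι) → #T ≠ M + 1) :
    ∃ T : Finset ι, (T : Set ι) ⊆ s ∧ #T ≤ M ∧ R.IsCover s T := by
  obtain ⟨N, hN⟩ := exists_maximal_isSeparated R s
  have hcard : N.encard ≤ M := by
    by_contra! hlt
    obtain ⟨T, hTN, hT⟩ := Set.exists_subset_encard_eq (Order.add_one_le_of_lt hlt)
    lift T to Finset ι using Set.finite_of_encard_eq_coe hT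
    rw [Set.encard_coe_eq_coe_finsetCard] at hT
    exact h T (hTN.trans hN.prop.1) (hN.prop.2.mono_right hTN) (mod_cast hT)
  lift N to Finset ι using Set.finite_of_encard_le_coe hcard
  rw [Set.encard_coe_eq_coe_finsetCard] at hcard
  exact ⟨N, hN.prop.1, mod_cast hcard, .of_maximal_isSeparated hN⟩

end Cover

section PartialSets

variable {ι X : Type*} {A₀ A₁ : ι → Finset X}

/-- The pairs `(A₀ i, A₁ i)` with `i ∈ s`, seen as partial subsets of `X` which contain `A₁ i` and
avoid `A₀ i`, shatter some `k` points. For the translates `A₀ - w` and `A₁ - w` of two colour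
classes this says that `A₁ | A₀` has VC-dimension at least `k` relative to `s`. -/
def HasVCDimAtLeast (A₀ A₁ : ι → Finset X) (s : Set ι) (k : ℕ) : Prop :=
  ∃ v : Fin k → X, ∀ S : Set (Fin k), ∃ w ∈ s, ∀ i, (i ∈ S → v i ∈ A₁ w) ∧ (i ∉ S → v i ∈ A₀ w)

theorem HasVCDimAtLeast.mono {s t : Set ι} {k : ℕ} (h : HasVCDimAtLeast A₀ A₁ s k) (hst : s ⊆ t) :
    HasVCDimAtLeast A₀ A₁ t k :=
  h.imp fun _ hv S ↦ (hv S).imp fun _ hw ↦ ⟨hst hw.1, hw.2⟩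

variable [DecidableEq X]

/-- The pairs `(A₀ i, A₁ i)` and `(A₀ j, A₁ j)` are within distance `r` in both components. -/
def closeRel (A₀ A₁ : ι → Finset X) (r : ℝ) : SetRel ι ι :=
  {(i, j) | #(A₀ i ∆ A₀ j) ≤ r ∧ #(A₁ i ∆ A₁ j) ≤ r}

theorem isRefl_closeRel {r : ℝ} (hr : 0 ≤ r) : (closeRel A₀ A₁ r).IsRefl :=
  ⟨fun i ↦ by simpa [closeRel] using hr⟩

instance isSymm_closeRel (r : ℝ) : (closeRel A₀ A₁ r).IsSymm :=
  ⟨fun i j h ↦ by simpa only [closeRel, Set.mem_ofPred_eq, symmDiff_comm] using h⟩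

variable [Fintype X] {T : Finset ι} {U : Finset X} {k : ℕ}

theorem hasVCDimAtLeast_of_shatters_image_sdiff (hU : ∀ i ∈ T, (A₀ i ∪ A₁ i)ᶜ ⊆ U)
    {K : Finset X} (hK : #K = k) (h : (T.image fun i ↦ A₁ i \ U).Shatters K) :
    HasVCDimAtLeast A₀ A₁ T k := by
  classical
  have hKU : Disjoint K U := by
    obtain ⟨C, hC, hKC⟩ := h.exists_superset
    obtain ⟨i, -, rfl⟩ := mem_image.1 hC
    exact disjoint_of_subset_left hKC sdiff_disjoint
  let v := (K.equivFinOfCardEq hK).symm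
  refine ⟨fun j ↦ v j, fun S ↦ ?_⟩
  obtain ⟨C, hC, hKC⟩ := h (filter_subset (fun x ↦ ∃ j ∈ S, (v j : X) = x) K)
  obtain ⟨w, hw, rfl⟩ := mem_image.1 hC
  refine ⟨w, hw, fun j ↦ ?_⟩
  have hjU : (v j : X) ∉ U := disjoint_left.1 hKU (v j).2
  have hmem : (v j : X) ∈ A₁ w ↔ j ∈ S :=
    calc (v j : X) ∈ A₁ w ↔ (v j : X) ∈ K ∩ (A₁ w \ U) := by simp [hjU]
      _ ↔ j ∈ S := by rw [hKC]; simp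
  refine ⟨hmem.2, fun hj ↦ ?_⟩
  have hdef : (v j : X) ∈ A₀ w ∪ A₁ w := not_not.1 fun h ↦ hjU (hU w hw (mem_compl.2 h))
  exact (mem_union.1 hdef).resolve_right (mt hmem.1 hj)

theorem vcDim_image_sdiff_le (hU : ∀ i ∈ T, (A₀ i ∪ A₁ i)ᶜ ⊆ U)
    (hVC : ¬ HasVCDimAtLeast A₀ A₁ T (k + 1)) : (T.image fun i ↦ A₁ i \ U).vcDim ≤ k := by
  refine Finset.sup_le fun K hK ↦ ?_
  by_contra! hlt
  obtain ⟨K', hK'K, hK'⟩ := exists_subset_card_eq hlt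
  exact hVC (hasVCDimAtLeast_of_shatters_image_sdiff hU hK'
    ((mem_shatterer.1 hK).mono_right hK'K))

theorem lt_card_symmDiff_sdiff_of_notMem_closeRel {r : ℝ} {i j : ι}
    (hi : Disjoint (A₀ i) (A₁ i)) (hj : Disjoint (A₀ j) (A₁ j))
    (hiU : (A₀ i ∪ A₁ i)ᶜ ⊆ U) (hjU : (A₀ j ∪ A₁ j)ᶜ ⊆ U) (hij : (i, j) ∉ closeRel A₀ A₁ r) :
    r - #U < #((A₁ i \ U) ∆ (A₁ j \ U)) := by
  by_contra! hle
  have hclose : ∀ D, D ⊆ U ∪ (A₁ i \ U) ∆ (A₁ j \ U) → (#D : ℝ) ≤ r := fun D hD ↦ by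
    have : (#D : ℝ) ≤ #U + #((A₁ i \ U) ∆ (A₁ j \ U)) :=
      mod_cast (card_le_card hD).trans (card_union_le _ _)
    linarith
  refine hij ⟨hclose _ fun x hx ↦ ?_, hclose _ fun x hx ↦ ?_⟩
  · rw [disjoint_left] at hi hj
    grind [mem_symmDiff, mem_compl]
  · grind [mem_symmDiff]

theorem card_le_pow_of_isSeparated_closeRel {δ : ℝ} (hδ₀ : 0 < δ) (hδ₁ : δ ≤ 1)
    (hdisj : ∀ i ∈ T, Disjoint (A₀ i) (A₁ i))
    (hrest : ∑ i ∈ T, #(A₀ i ∪ A₁ i)ᶜ ≤ δ / 2 * Fintype.card X)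
    (hVC : ¬ HasVCDimAtLeast A₀ A₁ T (k + 1))
    (hsep : (closeRel A₀ A₁ (δ * Fintype.card X)).IsSeparated (T : Set ι)) :
    (#T : ℝ) ≤ (48 / δ) ^ k := by
  set U := T.biUnion fun i ↦ (A₀ i ∪ A₁ i)ᶜ
  have hU : ∀ i ∈ T, (A₀ i ∪ A₁ i)ᶜ ⊆ U := fun i hi ↦
    subset_biUnion_of_mem (fun i ↦ (A₀ i ∪ A₁ i)ᶜ) hi
  have hUcard : (#U : ℝ) ≤ δ / 2 * Fintype.card X := hrest.trans' (mod_cast card_biUnion_le)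
  have hfar : (T : Set ι).Pairwise fun i j ↦
      δ / 2 * Fintype.card X < #((A₁ i \ U) ∆ (A₁ j \ U)) := fun i hi j hj hij ↦ by
    have := lt_card_symmDiff_sdiff_of_notMem_closeRel (hdisj i hi) (hdisj j hj) (hU i hi)
      (hU j hj) (hsep hi hj hij)
    linarith
  have hinj : Set.InjOn (fun i ↦ A₁ i \ U) T := fun i hi j hj hij ↦ by
    by_contra hne
    have := hfar hi hj hne
    simp only [hij, symmDiff_self, bot_eq_empty, card_empty, Nat.cast_zero] at this
    exact this.not_ge (by positivity)
  calc (#T : ℝ) = #(T.image fun i ↦ A₁ i \ U) := by rw [card_image_of_injOn hinj]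
    _ ≤ (24 / (δ / 2)) ^ k := by
        refine card_le_pow_of_pairwise_le_card_symmDiff (vcDim_image_sdiff_le hU hVC)
          (half_pos hδ₀) (by linarith) ?_
        rw [coe_image]
        exact (hinj.pairwise_image).2 (hfar.mono' fun _ _ ↦ le_of_lt)
    _ = (48 / δ) ^ k := by congr 1; field_simp; norm_num

theorem lt_one_of_notMem_closeRel {δ : ℝ} {i j : ι}
    (hij : (i, j) ∉ closeRel A₀ A₁ (δ * Fintype.card X)) : δ < 1 := by
  by_contra! hδ
  have hle : ∀ D : Finset X, (#D : ℝ) ≤ δ * Fintype.card X := fun D ↦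
    calc (#D : ℝ) ≤ Fintype.card X := mod_cast card_le_univ D
      _ ≤ δ * Fintype.card X := le_mul_of_one_le_left (Nat.cast_nonneg _) hδ
  exact hij ⟨hle _, hle _⟩

theorem exists_isCover_closeRel {δ ε : ℝ} (hδ : 0 < δ) (hε : ε ≤ (δ / 120) ^ (k + 1))
    {s : Set ι} (hdisj : ∀ i ∈ s, Disjoint (A₀ i) (A₁ i))
    (hrest : ∀ i ∈ s, #(A₀ i ∪ A₁ i)ᶜ ≤ ε * Fintype.card X)
    (hVC : ¬ HasVCDimAtLeast A₀ A₁ s (k + 1)) :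
    ∃ T : Finset ι, (T : Set ι) ⊆ s ∧ #T ≤ ⌈(120 / δ) ^ k⌉₊ ∧
      (closeRel A₀ A₁ (δ * Fintype.card X)).IsCover s T := by
  have : (closeRel A₀ A₁ (δ * Fintype.card X)).IsRefl := isRefl_closeRel (by positivity)
  refine exists_isCover_card_le fun T hTs hsep hcard ↦ ?_
  have hpow : 0 < (120 / δ) ^ k := by positivity
  have hδ₁ : δ < 1 := by
    obtain ⟨i, hi, j, hj, hij⟩ :=
      one_lt_card.1 (hcard ▸ Nat.lt_add_of_pos_left (Nat.ceil_pos.2 hpow))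
    exact lt_one_of_notMem_closeRel (hsep hi hj hij)
  have hTcard : (#T : ℝ) ≤ 3 * (120 / δ) ^ k := by
    have hone : 1 ≤ (120 / δ) ^ k := one_le_pow₀ ((one_le_div₀ hδ).2 (by linarith))
    have hceil := Nat.ceil_lt_add_one hpow.le
    rw [hcard, Nat.cast_add_one]
    linarith
  have hrestT : (∑ i ∈ T, #(A₀ i ∪ A₁ i)ᶜ : ℕ) ≤ δ / 2 * Fintype.card X :=
    calc ((∑ i ∈ T, #(A₀ i ∪ A₁ i)ᶜ : ℕ) : ℝ)
        ≤ #T * ((δ / 120) ^ (k + 1) * Fintype.card X) := by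
          rw [Nat.cast_sum, ← nsmul_eq_mul]
          exact sum_le_card_nsmul _ _ _ fun i hi ↦ (hrest i (hTs hi)).trans (by gcongr)
      _ ≤ 3 * (120 / δ) ^ k * ((δ / 120) ^ (k + 1) * Fintype.card X) := by gcongr
      _ = 3 * (120 / δ * (δ / 120)) ^ k * (δ / 120) * Fintype.card X := by
          rw [pow_succ, mul_pow]
          ring
      _ = δ / 40 * Fintype.card X := by
          rw [div_mul_div_cancel₀ hδ.ne', div_self (by norm_num), one_pow]
          ring
      _ ≤ δ / 2 * Fintype.card X := by gcongr; norm_num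
  have hle : (#T : ℝ) ≤ (120 / δ) ^ k :=
    (card_le_pow_of_isSeparated_closeRel hδ hδ₁.le (fun i hi ↦ hdisj i (hTs hi)) hrestT
      (mt (·.mono hTs) hVC) hsep).trans (by gcongr; norm_num)
  have hlt : (#T : ℝ) ≤ ⌈(120 / δ) ^ k⌉₊ := hle.trans (Nat.le_ceil _)
  rw [hcard] at hlt
  exact (Nat.lt_succ_self _).not_ge (mod_cast hlt)

end PartialSets

section Translates

theorem mem_image_sub {G : Type*} [AddGroup G] [DecidableEq G] {A : Finset G} {g x : G} :
    x ∈ A.image (· - g) ↔ x + g ∈ A := by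
  simp only [mem_image, sub_eq_iff_eq_add, exists_eq_right]

theorem stmt_7_general {G : Type*} [AddGroup G] [Fintype G] [DecidableEq G] {k : ℕ} {δ ε : ℝ}
    (hδ : 0 < δ) (hε : ε ≤ (δ / 120) ^ (k + 1)) {H : Set G} {A₀ A₁ : Finset G}
    (hdisj : Disjoint A₀ A₁) (hrest : #(A₀ ∪ A₁)ᶜ ≤ ε * Fintype.card G)
    (hVC : ¬ ∃ (v : Fin (k + 1) → G) (w : Set (Fin (k + 1)) → G), (∀ S, w S ∈ H) ∧
      ∀ (i : Fin (k + 1)) (S : Set (Fin (k + 1))),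
        (i ∈ S → v i + w S ∈ A₁) ∧ (i ∉ S → v i + w S ∈ A₀)) :
    ∃ m : ℕ, m ≤ ⌈(120 / δ) ^ k⌉₊ ∧ ∃ h : Fin m → G, (∀ i, h i ∈ H) ∧
      ∀ x ∈ H, ∃ i : Fin m,
        (#(A₀.image (· - x) ∆ A₀.image (· - h i)) : ℝ) ≤ δ * Fintype.card G ∧
        (#(A₁.image (· - x) ∆ A₁.image (· - h i)) : ℝ) ≤ δ * Fintype.card G := by
  have hVC' :
      ¬ HasVCDimAtLeast (fun g ↦ A₀.image (· - g)) (fun g ↦ A₁.image (· - g)) H (k + 1) := by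
    rintro ⟨v, hv⟩
    choose w hwH hw using hv
    simp only [mem_image_sub] at hw
    exact hVC ⟨v, w, hwH, fun i S ↦ hw S i⟩
  have hrest' : ∀ g ∈ H, #(A₀.image (· - g) ∪ A₁.image (· - g))ᶜ ≤ ε * Fintype.card G := by
    intro g _
    rwa [← image_union, card_compl, card_image_of_injective _ sub_left_injective, ← card_compl]
  obtain ⟨T, hTH, hTcard, hcover⟩ := exists_isCover_closeRel hδ hε
    (fun g _ ↦ (disjoint_image sub_left_injective).2 hdisj) hrest' hVC'
  refine ⟨#T, hTcard, fun i ↦ T.equivFin.symm i, fun i ↦ hTH (T.equivFin.symm i).2, fun x hx ↦ ?_⟩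
  obtain ⟨g, hg, hxg⟩ := hcover hx
  exact ⟨T.equivFin ⟨g, hg⟩, by simp only [Equiv.symm_apply_apply]; exact hxg⟩

end Translates

/-- Representation lemma for 3-colorings relative to a subspace. -/
theorem stmt_7 (p n k : ℕ) [Fact p.Prime] (δ ε : ℝ)
    (hδ0 : 0 < δ) (hδ1 : δ < 1/4) (hε0 : 0 < ε) (hεδ : ε ≤ (δ/120)^(k+1))
    (H : AddSubgroup (Fin n → ZMod p)) (A0 A1 A2 : Finset (Fin n → ZMod p))
    (hpart : ∀ x : Fin n → ZMod p,
      (x ∈ A0 ∧ x ∉ A1 ∧ x ∉ A2) ∨ (x ∉ A0 ∧ x ∈ A1 ∧ x ∉ A2) ∨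
      (x ∉ A0 ∧ x ∉ A1 ∧ x ∈ A2))
    (hA2 : (A2.card : ℝ) ≤ ε * Fintype.card (Fin n → ZMod p))
    (hVC : ¬ ∃ (v : Fin (k+1) → (Fin n → ZMod p))
        (w : Set (Fin (k+1)) → (Fin n → ZMod p)),
      (∀ S, w S ∈ H) ∧
      ∀ (i : Fin (k+1)) (S : Set (Fin (k+1))),
        (i ∈ S → v i + w S ∈ A1) ∧ (i ∉ S → v i + w S ∈ A0)) :
    ∃ m : ℕ, m ≤ ⌈(120/δ)^k⌉₊ ∧
      ∃ h : Fin m → (Fin n → ZMod p), (∀ i, h i ∈ H) ∧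
        ∀ x ∈ H, ∃ i : Fin m,
          ((symmDiff (A0.image (· - x)) (A0.image (· - h i))).card : ℝ)
            ≤ δ * Fintype.card (Fin n → ZMod p) ∧
          ((symmDiff (A1.image (· - x)) (A1.image (· - h i))).card : ℝ)
            ≤ δ * Fintype.card (Fin n → ZMod p) := by
  obtain rfl : A2 = (A0 ∪ A1)ᶜ := by ext x; have := hpart x; grind [mem_compl]
  exact stmt_7_general hδ0 hεδ (disjoint_left.2 fun x ↦ by have := hpart x; tauto) hA2 hVC
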